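/- There is a family, indexed by the subsets of ℕ (hence of cardinality 2^ℵ0), of pairwise distinct clones on {0,1,2}, each consisting of operations that preserve C_3, such that no two distinct members of the family are homomorphically equivalent (i.e., for any two distinct members, clone homomorphisms do not exist in both directions). -/

import Mathlib

/-- The three-element domain `{0,1,2}`. -/
abbrev D3 : Type := Fin 3

/-- `n`-ary operations on `{0,1,2}`. -/
abbrev Op (n : ℕ) : Type := (Fin n → D3) → D3

/-- An `n`-ary operation `f` preserves a `k`-ary relation `R`. -/
def Preserves {n k : ℕ} (f : Op n) (R : Set (Fin k → D3)) : Prop :=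
  ∀ t : Fin n → (Fin k → D3), (∀ i, t i ∈ R) → (fun j => f fun i => t i j) ∈ R

/-- `C₃ = {(0,1),(1,2),(2,0)}`. -/
def C3rel : Set (Fin 2 → D3) :=
  { t | (t 0 = 0 ∧ t 1 = 1) ∨ (t 0 = 1 ∧ t 1 = 2) ∨ (t 0 = 2 ∧ t 1 = 0) }

/-- A clone on `{0,1,2}`: a set of operations (of each arity) containing all projections
and closed under composition. -/
structure IsClone (C : ∀ n, Set (Op n)) : Prop where
  proj_mem : ∀ (n : ℕ) (i : Fin n), (fun x => x i) ∈ C n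
  comp_mem : ∀ (n m : ℕ) (f : Op n) (g : Fin n → Op m),
    f ∈ C n → (∀ i, g i ∈ C m) → (fun x => f fun i => g i x) ∈ C m

/-- `ξ` is a clone homomorphism from `C` to `D`. -/
def IsCloneHom (C D : ∀ n, Set (Op n)) (ξ : ∀ n, Op n → Op n) : Prop :=
  (∀ n, ∀ f ∈ C n, ξ n f ∈ D n) ∧
  (∀ (n : ℕ) (i : Fin n), ξ n (fun x => x i) = fun x => x i) ∧
  (∀ (n m : ℕ) (f : Op n) (g : Fin n → Op m), f ∈ C n → (∀ i, g i ∈ C m) →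
    ξ m (fun x => f fun i => g i x) = fun x => ξ n f fun i => ξ m (g i) x)

/-- Two clones are homomorphically equivalent if there are clone homomorphisms
in both directions. -/
def HomEquivalent (C D : ∀ n, Set (Op n)) : Prop :=
  (∃ ξ, IsCloneHom C D ξ) ∧ (∃ ξ, IsCloneHom D C ξ)


/-! ### Helpers -/

/-- Preservation of a relation with arbitrary index type. -/
def Pres {n : ℕ} {ι : Type} (f : Op n) (R : Set (ι → D3)) : Prop :=
  ∀ t : Fin n → (ι → D3), (∀ i, t i ∈ R) → (fun j => f fun i => t i j) ∈ R

/-- The cyclic (rock-paper-scissors) operation. -/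
def pp (x y : D3) : D3 := if y = x + 1 then y else x

def pOp : Op 2 := fun v => pp (v 0) (v 1)

def RR : Set (Bool → D3) :=
  { t | (t true = 0 ∨ t true = 1) ∧ (t false = 0 ∨ t false = 1) ∧ (t true ≠ 0 ∨ t false ≠ 0) }

/-- The separating relation. -/
def QQ (N : ℕ) : Set ((Fin N ⊕ Fin N) → D3) :=
  { t | (∀ j, t (Sum.inr j) = 0 ∨ t (Sum.inr j) = 1) ∧
        (∀ i j, t (Sum.inr j) = 0 → i ≠ j → t (Sum.inl i) ≠ 2) ∧
        ((∀ j, t (Sum.inr j) = 0) → ∃ i, t (Sum.inl i) ≠ 0) }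

def Alt {m : ℕ} (x t : Fin (m+2) → D3) (a : D3) : Prop :=
  ∃ k, x k = a + 1 ∧ t k = a + 2 ∧ ∀ i, i ≠ k → x i = a

open Classical in
noncomputable def baseV {m : ℕ} (x : Fin (m+2) → D3) : D3 :=
  if ∀ i, x i = x 0 ∨ x i = x 0 + 1 then x 0 else x 0 + 2

open Classical in
noncomputable def gg {m : ℕ} (x t : Fin (m+2) → D3) : D3 :=
  if ∀ i, x i = x 0 then (if ∀ i, t i = t 0 then pp (x 0) (t 0) else x 0)
  else if Alt x t (baseV x) then baseV x else baseV x + 1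

noncomputable def gOp (m : ℕ) : Op ((m+2)+(m+2)) :=
  fun y => gg (fun i => y (Fin.castAdd _ i)) (fun i => y (Fin.natAdd _ i))

def FF (S : Set ℕ) : ∀ n, Set (Op n) := fun _ =>
  { f | Preserves f C3rel ∧ Pres f RR ∧ ∀ m, m ∉ S → Pres f (QQ (m+2)) }

theorem Pres.comp {n m : ℕ} {ι : Type} {R : Set (ι → D3)} {f : Op n} {g : Fin n → Op m}
    (hf : Pres f R) (hg : ∀ i, Pres (g i) R) : Pres (fun x => f fun i => g i x) R := by
  intro t ht
  exact hf (fun i j => g i fun l => t l j) (fun i => hg i t ht)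

theorem FF_clone (S : Set ℕ) : IsClone (FF S) where
  proj_mem n i := ⟨fun t ht => ht i, fun t ht => ht i, fun m _ t ht => ht i⟩
  comp_mem n m f g hf hg :=
    ⟨fun t ht => hf.1 (fun i j => g i fun l => t l j) (fun i => (hg i).1 t ht),
     hf.2.1.comp fun i => (hg i).2.1,
     fun k hk => (hf.2.2 k hk).comp fun i => (hg i).2.2 k hk⟩

theorem c3_iff (t : Fin 2 → D3) : t ∈ C3rel ↔ t 1 = t 0 + 1 := by
  unfold C3rel
  simp only [Set.mem_setOf_eq]
  generalize t 0 = a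
  generalize t 1 = b
  revert a b
  decide

theorem c3_shift {n : ℕ} {f : Op n} : Preserves f C3rel ↔
    ∀ x : Fin n → D3, f (fun i => x i + 1) = f x + 1 := by
  constructor
  · intro h x
    have := h (fun i => ![x i, x i + 1]) (fun i => by rw [c3_iff]; simp)
    rw [c3_iff] at this
    simpa using this
  · intro h t ht
    rw [c3_iff]
    have : (fun i => t i 1) = fun i => t i 0 + 1 := by
      funext i; exact (c3_iff _).1 (ht i)
    show f (fun i => t i 1) = f (fun i => t i 0) + 1
    rw [this, h]

theorem pp_shift : ∀ a b : D3, pp (a+1) (b+1) = pp a b + 1 := by decide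

theorem pOp_mem (S : Set ℕ) : pOp ∈ FF S 2 := by
  refine ⟨c3_shift.2 fun x => pp_shift _ _, ?_, ?_⟩
  · intro t ht
    have h0 := ht 0
    have h1 := ht 1
    simp only [RR, Set.mem_setOf_eq, pOp] at *
    revert h0 h1
    generalize t 0 true = a
    generalize t 0 false = b
    generalize t 1 true = c
    generalize t 1 false = d
    revert a b c d
    decide
  · intro m _ t ht
    obtain ⟨a0, b0, c0⟩ := ht 0
    obtain ⟨a1, b1, c1⟩ := ht 1
    have key : ∀ a b : D3, (a = 0 ∨ a = 1) → (b = 0 ∨ b = 1) →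
      (pp a b = 0 ∨ pp a b = 1) ∧ (pp a b = 0 → a = 0 ∧ b = 0) := by decide
    have key2 : ∀ a b : D3, a ≠ 2 → b ≠ 2 → pp a b ≠ 2 ∧ (a ≠ 0 → pp a b ≠ 0) := by decide
    refine ⟨fun j => (key _ _ (a0 j) (a1 j)).1, ?_, ?_⟩
    · intro i j hj hij
      have := (key _ _ (a0 j) (a1 j)).2 hj
      exact (key2 _ _ (b0 i j this.1 hij) (b1 i j this.2 hij)).1
    · intro h
      have h' := fun j => (key _ _ (a0 j) (a1 j)).2 (h j)
      obtain ⟨i, hi⟩ := c0 fun j => (h' j).1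
      obtain ⟨j, hj⟩ := exists_ne i
      exact ⟨i, (key2 _ _ (b0 i j (h' j).1 hj.symm) (b1 i j (h' j).2 hj.symm)).2 hi⟩

theorem gg_const {m : ℕ} {x t : Fin (m+2) → D3} (c d : D3) (hx : ∀ i, x i = c)
    (ht : ∀ i, t i = d) : gg x t = pp c d := by
  unfold gg
  rw [if_pos (fun i => by rw [hx, hx]), if_pos (fun i => by rw [ht, ht]), hx, ht]

theorem gg_const' {m : ℕ} {x t : Fin (m+2) → D3} (c : D3) (hx : ∀ i, x i = c)
    (ht : ¬ ∀ i, t i = t 0) : gg x t = c := by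
  unfold gg
  rw [if_pos (fun i => by rw [hx, hx]), if_neg ht, hx]

theorem base01 {m : ℕ} {x : Fin (m+2) → D3} (hx : ∀ i, x i = 0 ∨ x i = 1)
    (hn : ¬ ∀ i, x i = x 0) : baseV x = 0 := by
  unfold baseV
  rcases hx 0 with h | h
  · rw [if_pos (fun i => by rw [h]; simpa using hx i), h]
  · rw [if_neg, h]
    · decide
    · intro hc
      apply hn
      intro i
      rcases hc i with h1 | h1
      · exact h1
      · rw [h] at h1
        rcases hx i with h2 | h2
        · rw [h2] at h1; exact absurd h1 (by decide)
        · rw [h2, h]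

theorem gg_non {m : ℕ} {x t : Fin (m+2) → D3} (hx : ∀ i, x i = 0 ∨ x i = 1)
    (hn : ¬ ∀ i, x i = x 0) :
    (Alt x t 0 ∧ gg x t = 0) ∨ gg x t = 1 := by
  unfold gg
  rw [if_neg hn, base01 hx hn]
  by_cases h : Alt x t 0
  · left; exact ⟨h, if_pos h⟩
  · right; rw [if_neg h]; rfl

theorem gg_alt {m : ℕ} {x t : Fin (m+2) → D3} (h : Alt x t 0) : gg x t = 0 := by
  obtain ⟨k, h1, h2, h3⟩ := id h
  have hx : ∀ i, x i = 0 ∨ x i = 1 := by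
    intro i
    by_cases hi : i = k
    · right; rw [hi, h1]; rfl
    · left; exact h3 i hi
  have hn : ¬ ∀ i, x i = x 0 := by
    intro hc
    obtain ⟨j, hj⟩ := exists_ne k
    have := h3 j hj
    rw [hc j, ← hc k, h1] at this
    exact absurd this (by decide)
  unfold gg
  rw [if_neg hn, base01 hx hn, if_pos h]

/-- Behaviour on Boolean rows. -/
theorem gg_bool {m : ℕ} {x t : Fin (m+2) → D3} (hx : ∀ i, x i = 0 ∨ x i = 1)
    (ht : ∀ i, t i = 0 ∨ t i = 1) :
    (gg x t = 0 ∨ gg x t = 1) ∧ (gg x t = 0 → (∀ i, x i = 0) ∧ ∃ k, t k = 0) := by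
  by_cases hn : ∀ i, x i = x 0
  · by_cases hd : ∀ i, t i = t 0
    · rw [gg_const _ _ hn hd]
      have key : ∀ a b : D3, (a = 0 ∨ a = 1) → (b = 0 ∨ b = 1) →
        (pp a b = 0 ∨ pp a b = 1) ∧ (pp a b = 0 → a = 0 ∧ b = 0) := by decide
      have := key _ _ (hx 0) (ht 0)
      refine ⟨this.1, fun h => ⟨fun i => ?_, 0, (this.2 h).2⟩⟩
      rw [hn i]; exact (this.2 h).1
    · rw [gg_const' _ hn hd]
      refine ⟨hx 0, fun h => ⟨fun i => (hn i).trans h, ?_⟩⟩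
      by_contra hc
      push Not at hc
      have h1 : ∀ i, t i = 1 := fun i => (ht i).resolve_left (hc i)
      exact hd fun i => by rw [h1, h1]
  · rcases gg_non (t := t) hx hn with ⟨⟨k, _, h2, _⟩, _⟩ | h
    · exfalso
      rcases ht k with h | h <;> rw [h] at h2 <;> exact absurd h2 (by decide)
    · rw [h]
      exact ⟨Or.inr rfl, fun h => absurd h (by decide)⟩

theorem gg_ne_two {m : ℕ} {x t : Fin (m+2) → D3} (hx : ∀ i, x i = 0 ∨ x i = 1)
    (ht : ∃ k, t k ≠ 2) : gg x t ≠ 2 := by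
  by_cases hn : ∀ i, x i = x 0
  · by_cases hd : ∀ i, t i = t 0
    · rw [gg_const _ _ hn hd]
      obtain ⟨k, hk⟩ := ht
      rw [hd k] at hk
      have := hx 0
      revert this hk
      generalize x 0 = a
      generalize t 0 = b
      revert a b
      decide
    · rw [gg_const' _ hn hd]
      rcases hx 0 with h | h <;> rw [h] <;> decide
  · rcases gg_non (t := t) hx hn with ⟨_, h⟩ | h <;> rw [h] <;> decide

theorem gg_zero {m : ℕ} {x t : Fin (m+2) → D3} (hx : ∀ i, x i = 0 ∨ x i = 1)
    (h0 : gg x t = 0) (k : Fin (m+2)) (hk : x k ≠ 0) :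
    t k = 2 ∧ ∀ i, i ≠ k → x i = 0 := by
  by_cases hn : ∀ i, x i = x 0
  · exfalso
    have h1 : x 0 = 1 := by rw [← hn k]; exact (hx k).resolve_left hk
    by_cases hd : ∀ i, t i = t 0
    · rw [gg_const _ _ hn hd, h1] at h0
      revert h0
      generalize t 0 = b
      revert b
      decide
    · rw [gg_const' _ hn hd, h1] at h0
      exact absurd h0 (by decide)
  · rcases gg_non (t := t) hx hn with ⟨⟨l, h1, h2, h3⟩, _⟩ | h
    · have : k = l := by
        by_contra hc
        exact hk (h3 k hc)
      subst this
      exact ⟨h2, h3⟩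
    · rw [h] at h0; exact absurd h0 (by decide)

theorem gg_shift {m : ℕ} (x t : Fin (m+2) → D3) :
    gg (fun i => x i + 1) (fun i => t i + 1) = gg x t + 1 := by
  have hb : baseV (fun i => x i + 1) = baseV x + 1 := by
    unfold baseV
    simp only [add_left_inj]
    split_ifs
    · rfl
    · abel
  have ha : ∀ a, Alt (fun i => x i + 1) (fun i => t i + 1) (a + 1) ↔ Alt x t a := by
    intro a
    unfold Alt
    simp only [add_right_comm a 1, add_left_inj]
  unfold gg
  rw [hb, ha]
  simp only [add_left_inj, pp_shift]
  split_ifs <;> rfl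

theorem gOp_mem_base (m : ℕ) : Preserves (gOp m) C3rel ∧ Pres (gOp m) RR := by
  refine ⟨c3_shift.2 fun x => gg_shift _ _, ?_⟩
  intro t ht
  have h1 := gg_bool (x := fun i => t (Fin.castAdd _ i) true)
    (t := fun i => t (Fin.natAdd (m+2) i) true) (fun i => (ht _).1) (fun i => (ht _).1)
  have h2 := gg_bool (x := fun i => t (Fin.castAdd _ i) false)
    (t := fun i => t (Fin.natAdd (m+2) i) false) (fun i => (ht _).2.1) (fun i => (ht _).2.1)
  refine ⟨h1.1, h2.1, ?_⟩
  by_contra hc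
  push Not at hc
  rcases (ht (Fin.castAdd _ 0)).2.2 with h | h
  · exact h ((h1.2 hc.1).1 0)
  · exact h ((h2.2 hc.2).1 0)

theorem gOp_pres {m n : ℕ} (hmn : m ≠ n) : Pres (gOp m) (QQ (n+2)) := by
  intro c hc
  have hw := fun j => gg_bool (x := fun i => c (Fin.castAdd _ i) (Sum.inr j))
    (t := fun i => c (Fin.natAdd (m+2) i) (Sum.inr j)) (fun i => (hc _).1 j) (fun i => (hc _).1 j)
  have three : ∀ a : D3, a ≠ 2 → a = 0 ∨ a = 1 := by decide
  refine ⟨fun j => (hw j).1, ?_, ?_⟩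
  · intro i j hj hij
    obtain ⟨hx, k, hk⟩ := (hw j).2 hj
    exact gg_ne_two (fun l => three _ ((hc _).2.1 i j (hx l) hij))
      ⟨k, (hc _).2.1 i j hk hij⟩
  · intro hj
    by_contra hcon
    push Not at hcon
    have hx : ∀ i k, c (Fin.castAdd (m+2) k) (Sum.inl i) = 0 ∨
        c (Fin.castAdd (m+2) k) (Sum.inl i) = 1 := by
      intro i k
      obtain ⟨j, hji⟩ := exists_ne i
      exact three _ ((hc _).2.1 i j (((hw j).2 (hj j)).1 k) hji.symm)
    have hex : ∀ k, ∃ i, c (Fin.castAdd (m+2) k) (Sum.inl i) ≠ 0 := fun k =>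
      (hc _).2.2 fun j => ((hw j).2 (hj j)).1 k
    choose φ hφ using hex
    have hz := fun k => gg_zero (hx (φ k)) (hcon (φ k)) k (hφ k)
    have hinj : Function.Injective φ := by
      intro k l hkl
      by_contra hne
      apply hφ k
      rw [hkl]
      exact (hz l).2 k hne
    have hsurj : Function.Surjective φ := by
      intro j
      obtain ⟨k, hk⟩ := ((hw j).2 (hj j)).2
      refine ⟨k, ?_⟩
      by_contra hne
      exact (hc _).2.1 (φ k) j hk hne (hz k).1
    have := Fintype.card_of_bijective ⟨hinj, hsurj⟩
    simp at this
    exact hmn this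

theorem gOp_not_pres (n : ℕ) : ¬ Pres (gOp n) (QQ (n+2)) := by
  intro h
  let X : Fin (n+2) → (Fin (n+2) ⊕ Fin (n+2)) → D3 :=
    fun k => Sum.elim (fun i => if i = k then 1 else 0) (fun _ => 0)
  let T : Fin (n+2) → (Fin (n+2) ⊕ Fin (n+2)) → D3 :=
    fun k => Sum.elim (fun i => if i = k then 2 else 0) (fun j => if j = k then 0 else 1)
  have hX : ∀ k, X k ∈ QQ (n+2) := by
    intro k
    refine ⟨fun j => Or.inl rfl, ?_, fun _ => ⟨k, ?_⟩⟩
    · intro i j _ _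
      simp only [X, Sum.elim_inl]
      split_ifs <;> decide
    · simp [X]
  have hT : ∀ k, T k ∈ QQ (n+2) := by
    intro k
    refine ⟨fun j => ?_, ?_, fun hh => ?_⟩
    · simp only [T, Sum.elim_inr]
      split_ifs <;> decide
    · intro i j hj hij
      have : j = k := by
        by_contra hne
        simp [T, hne] at hj
      subst this
      simp [T, hij]
    · exfalso
      obtain ⟨j, hj⟩ := exists_ne k
      have := hh j
      simp [T, hj] at this
  have hm := h (Fin.addCases X T) (by
    intro i
    refine Fin.addCases (fun i => ?_) (fun i => ?_) i
    · rw [Fin.addCases_left]; exact hX i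
    · rw [Fin.addCases_right]; exact hT i)
  have hval : ∀ s, (gOp n fun i => (Fin.addCases X T i : _ → D3) s) =
      gg (fun k => X k s) (fun k => T k s) := by
    intro s
    simp only [gOp, Fin.addCases_left, Fin.addCases_right]
  obtain ⟨i, hi⟩ := hm.2.2 (by
    intro j
    show (gOp n fun i => (Fin.addCases X T i : _ → D3) (Sum.inr j)) = 0
    rw [hval]
    apply gg_const'
    · intro k; rfl
    · intro hcst
      obtain ⟨l, hl⟩ := exists_ne j
      have h1 := (hcst l).trans (hcst j).symm
      simp [T, hl.symm] at h1)
  apply hi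
  show (gOp n fun k => (Fin.addCases X T k : _ → D3) (Sum.inl i)) = 0
  rw [hval]
  apply gg_alt
  refine ⟨i, by simp [X], by simp [T], fun k hk => ?_⟩
  simp [X, hk.symm]

/-- The rigid ternary terms. -/
def s0 : Op 3 := fun v => pp (pp (v 1) (v 2)) (v 0)
def s1 : Op 3 := fun v => pp (s0 v) (v 1)
def s2 : Op 3 := fun v => pp (pp (v 0) (v 1)) (pp (v 1) (v 2))
def ss (a : D3) : Op 3 := if a = 0 then s0 else if a = 1 then s1 else s2

theorem ss_spec : ∀ v : Fin 3 → D3,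
    (∀ a, ss a v = ss 0 v) ∨ (∀ a, ss a v = a + v 0) := by decide

theorem ss_val : ∀ a, ss a ![0, 1, 2] = a := by decide

theorem FF_idem {S : Set ℕ} {n : ℕ} {f : Op n} (hf : f ∈ FF S n) (c : D3) :
    f (fun _ => c) = c := by
  have h1 : f (fun _ => 1) = 1 := by
    have := hf.2.1 (fun _ _ => 1) (fun i => by simp [RR])
    simp only [RR, Set.mem_setOf_eq] at this
    rcases this with ⟨h, _, h'⟩
    tauto
  have hs := c3_shift.1 hf.1
  have h2 : f (fun _ => 2) = 2 := by
    have := hs (fun _ => 1)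
    rw [h1] at this
    exact this
  have h0 : f (fun _ => 0) = 0 := by
    have := hs (fun _ => 2)
    rw [h2] at this
    exact this
  fin_cases c
  · exact h0
  · exact h1
  · exact h2

theorem FF_shift {S : Set ℕ} {n : ℕ} {f : Op n} (hf : f ∈ FF S n) (x : Fin n → D3) (c : D3) :
    f (fun i => x i + c) = f x + c := by
  have hs := c3_shift.1 hf.1
  have h2 : f (fun i => x i + 2) = f x + 2 := by
    have h := hs (fun i => x i + 1)
    rw [hs x] at h
    simp only [add_assoc] at h
    exact h
  fin_cases c
  · simp
  · exact hs x
  · exact h2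

theorem FF_ident {S : Set ℕ} {n : ℕ} {f : Op n} (hf : f ∈ FF S n) (a : Fin n → D3) :
    (fun v => f fun i => ss (a i) v) = ss (f a) := by
  funext v
  rcases ss_spec v with h | h
  · rw [h (f a)]
    simp only [h (a _)]
    exact FF_idem hf _
  · rw [h (f a)]
    simp only [h (a _)]
    exact FF_shift hf _ _

theorem hom_p {S T : Set ℕ} {ξ : ∀ n, Op n → Op n} (hξ : IsCloneHom (FF S) (FF T) ξ) :
    ξ 2 pOp = pOp := by
  obtain ⟨hm, hp, hc⟩ := hξ
  have hr := hm 2 pOp (pOp_mem S)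
  have hpc : ∀ a b : D3, pp a b = pp b a := by decide
  have hcomm := hc 2 2 pOp ![fun x => x 1, fun x => x 0] (pOp_mem S) (by
    intro i
    fin_cases i
    · exact (FF_clone S).proj_mem 2 1
    · exact (FF_clone S).proj_mem 2 0)
  have e1 : (fun x : Fin 2 → D3 => pOp fun i =>
      (![fun x => x 1, fun x => x 0] : Fin 2 → Op 2) i x) = pOp := by
    funext x
    exact hpc _ _
  rw [e1] at hcomm
  generalize ξ 2 pOp = r at hr hcomm
  have hcm : ∀ a b, r ![a, b] = r ![b, a] := by
    intro a b
    have h := congrFun hcomm ![a, b]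
    rw [h]
    congr 1
    funext i
    fin_cases i
    · exact congrFun (hp 2 1) ![a, b]
    · exact congrFun (hp 2 0) ![a, b]
  have h01 : r ![0, 1] = 1 := by
    have h := hr.2.1 ![fun b => if b then 0 else 1, fun b => if b then 1 else 0] (by
      intro i
      fin_cases i <;> simp [RR])
    have e1 : (fun i => (![fun b => if b then 0 else 1, fun b => if b then 1 else 0] :
        Fin 2 → Bool → D3) i true) = ![0, 1] := by
      funext i; fin_cases i <;> rfl
    have e2 : (fun i => (![fun b => if b then 0 else 1, fun b => if b then 1 else 0] :
        Fin 2 → Bool → D3) i false) = ![1, 0] := by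
      funext i; fin_cases i <;> rfl
    obtain ⟨h1, h2, h3⟩ := h
    simp only [e1, e2] at h1 h2 h3
    rw [hcm 1 0] at h3
    tauto
  have hsh : ∀ a b c, r ![a + c, b + c] = r ![a, b] + c := by
    intro a b c
    rw [← FF_shift hr ![a, b] c]
    congr 1
    funext i
    fin_cases i <;> rfl
  have hid : ∀ a, r ![a, a] = a := by
    intro a
    refine Eq.trans ?_ (FF_idem hr a)
    congr 1
    funext i
    fin_cases i <;> rfl
  have h12 : r ![1, 2] = 2 := by
    have h := hsh 0 1 1
    rw [h01] at h
    exact h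
  have h20 : r ![2, 0] = 0 := by
    have h := hsh 0 1 2
    rw [h01] at h
    exact h
  have key : ∀ a b, r ![a, b] = pp a b := by
    intro a b
    fin_cases a <;> fin_cases b
    · exact hid 0
    · exact h01
    · exact (hcm 0 2).trans h20
    · exact (hcm 1 0).trans h01
    · exact hid 1
    · exact h12
    · exact h20
    · exact (hcm 2 1).trans h12
    · exact hid 2
  funext x
  have hx : x = ![x 0, x 1] := by
    funext i; fin_cases i <;> rfl
  rw [hx]
  exact key _ _

theorem fix_pp {S T : Set ℕ} {ξ : ∀ n, Op n → Op n} (hξ : IsCloneHom (FF S) (FF T) ξ)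
    {g h : Op 3} (hg : g ∈ FF S 3 ∧ ξ 3 g = g) (hh : h ∈ FF S 3 ∧ ξ 3 h = h) :
    (fun v => pp (g v) (h v)) ∈ FF S 3 ∧
      ξ 3 (fun v => pp (g v) (h v)) = fun v => pp (g v) (h v) := by
  have hmem : ∀ i, (![g, h] : Fin 2 → Op 3) i ∈ FF S 3 := by
    intro i
    fin_cases i
    · exact hg.1
    · exact hh.1
  refine ⟨(FF_clone S).comp_mem 2 3 pOp ![g, h] (pOp_mem S) hmem, ?_⟩
  refine (hξ.2.2 2 3 pOp ![g, h] (pOp_mem S) hmem).trans ?_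
  rw [hom_p hξ]
  funext v
  show pp (ξ 3 g v) (ξ 3 h v) = _
  rw [hg.2, hh.2]

theorem fix_ss {S T : Set ℕ} {ξ : ∀ n, Op n → Op n} (hξ : IsCloneHom (FF S) (FF T) ξ)
    (a : D3) : ss a ∈ FF S 3 ∧ ξ 3 (ss a) = ss a := by
  have hpr : ∀ i : Fin 3, (fun x => x i) ∈ FF S 3 ∧ ξ 3 (fun x => x i) = fun x => x i :=
    fun i => ⟨(FF_clone S).proj_mem 3 i, hξ.2.1 3 i⟩
  have k0 : s0 ∈ FF S 3 ∧ ξ 3 s0 = s0 := fix_pp hξ (fix_pp hξ (hpr 1) (hpr 2)) (hpr 0)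
  have k1 : s1 ∈ FF S 3 ∧ ξ 3 s1 = s1 := fix_pp hξ k0 (hpr 1)
  have k2 : s2 ∈ FF S 3 ∧ ξ 3 s2 = s2 :=
    fix_pp hξ (fix_pp hξ (hpr 0) (hpr 1)) (fix_pp hξ (hpr 1) (hpr 2))
  unfold ss
  split_ifs
  · exact k0
  · exact k1
  · exact k2

theorem hom_id {S T : Set ℕ} {ξ : ∀ n, Op n → Op n} (hξ : IsCloneHom (FF S) (FF T) ξ)
    {n : ℕ} {f : Op n} (hf : f ∈ FF S n) : ξ n f = f := by
  funext a
  have h := hξ.2.2 n 3 f (fun i => ss (a i)) hf (fun i => (fix_ss hξ (a i)).1)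
  simp only [FF_ident hf a, (fix_ss hξ _).2] at h
  have h2 := congrFun h ![0, 1, 2]
  simp only [ss_val] at h2
  exact h2.symm

theorem FF_sub {S T : Set ℕ} (h : ∃ ξ, IsCloneHom (FF S) (FF T) ξ) : S ⊆ T := by
  obtain ⟨ξ, hξ⟩ := h
  intro n hn
  by_contra hT
  have hg : gOp n ∈ FF S _ := by
    refine ⟨(gOp_mem_base n).1, (gOp_mem_base n).2, fun m hm => gOp_pres ?_⟩
    rintro rfl
    exact hm hn
  have h1 := hξ.1 _ _ hg
  rw [hom_id hξ hg] at h1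
  exact gOp_not_pres n (h1.2.2 n hT)

theorem id_hom (S : Set ℕ) : IsCloneHom (FF S) (FF S) (fun _ f => f) :=
  ⟨fun _ _ h => h, fun _ _ => rfl, fun _ _ _ _ _ _ => rfl⟩

/-- There is a family, indexed by the subsets of `ℕ`, of pairwise distinct clones on `{0,1,2}`
consisting of operations preserving `C₃`, no two distinct members of which are
homomorphically equivalent. -/
theorem stmt1 :
    ∃ F : Set ℕ → (∀ n, Set (Op n)),
      (∀ S, IsClone (F S)) ∧
      (∀ S (n : ℕ), ∀ f ∈ F S n, Preserves f C3rel) ∧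
      (∀ S T, S ≠ T → F S ≠ F T ∧ ¬ HomEquivalent (F S) (F T)) := by
  have key : ∀ S T, HomEquivalent (FF S) (FF T) → S = T := fun S T h =>
    Set.Subset.antisymm (FF_sub h.1) (FF_sub h.2)
  refine ⟨FF, FF_clone, fun S n f hf => hf.1, fun S T hST => ⟨fun h => hST (key S T ?_),
    fun h => hST (key S T h)⟩⟩
  rw [h]
  exact ⟨⟨_, id_hom T⟩, ⟨_, id_hom T⟩⟩
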